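/- Fix n ≥ 2, m ≥ 1, and q ≥ 1. Let Z be the S2S core tensor for arity n with m segments of size q whose block Z_{j_0,...,j_n} equals I_1^n when j_0 = j_1 = ⋯ = j_n and equals I_0^n (the zero tensor) otherwise. Then for all vectors r, e_1, ..., e_n ∈ ℝ^{mq}, the S2S score satisfies f_z(r, e_1, ..., e_n; Z) = ⟨r, e_1, ..., e_n⟩, i.e., the n-CP scoring function is a special case of the S2S sparse core tensor scoring function. -/

import Mathlib

open Finset

/-- The `j`-th segment (of length `q`) of a vector in `ℝ^(M·q)`:
coordinates `(j-1)q+1` through `jq` (1-based), i.e. `j·q, …, j·q + q - 1` (0-based). -/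
def seg (M q : ℕ) (v : Fin (M * q) → ℝ) (j : Fin M) : Fin q → ℝ :=
  fun k => v (finProdFinEquiv (j, k))

/-- Multilinear inner product of `n+1` vectors in `ℝ^q`. -/
def mip (n q : ℕ) (v : Fin (n + 1) → Fin q → ℝ) : ℝ :=
  ∑ k : Fin q, ∏ i : Fin (n + 1), v i k

/-- The `(n+1)`-order superdiagonal tensor `I_v^n` of size `q` in each mode:
`v` when all indices coincide, `0` elsewhere. -/
def diagT (n q : ℕ) (v : ℝ) : (Fin (n + 1) → Fin q) → ℝ :=
  fun k => if ∀ i, k i = k 0 then v else 0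

/-- Tucker product of an `(n+1)`-order tensor of size `q` in each mode with
vectors `u 0, …, u n ∈ ℝ^q`. -/
def tucker (n q : ℕ) (G : (Fin (n + 1) → Fin q) → ℝ)
    (u : Fin (n + 1) → Fin q → ℝ) : ℝ :=
  ∑ k : Fin (n + 1) → Fin q, G k * ∏ i : Fin (n + 1), u i (k i)

/-- S2S score of vectors `vs 0 = r, vs 1 = e_1, …, vs n = e_n ∈ ℝ^(m·q)` with
an S2S core tensor `Z` for arity `n` with `m` segments of size `q`. -/
def s2sScore (n m q : ℕ)
    (Z : (Fin (n + 1) → Fin m) → (Fin (n + 1) → Fin q) → ℝ)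
    (vs : Fin (n + 1) → Fin (m * q) → ℝ) : ℝ :=
  ∑ j : Fin (n + 1) → Fin m, tucker n q (Z j) (fun i => seg m q (vs i) (j i))

/-- S2S score computed on the first `m` segments of vectors in `ℝ^(M·q)` (`m ≤ M`). -/
def s2sScoreFirst (n m M q : ℕ) (h : m ≤ M)
    (Z : (Fin (n + 1) → Fin m) → (Fin (n + 1) → Fin q) → ℝ)
    (vs : Fin (n + 1) → Fin (M * q) → ℝ) : ℝ :=
  ∑ j : Fin (n + 1) → Fin m,
    tucker n q (Z j) (fun i => seg M q (vs i) (Fin.castLE h (j i)))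

/-- A sparse core tensor: every block lies in `{-I_1^n, I_0^n, I_1^n}`. -/
def SparseCore (n m q : ℕ)
    (Z : (Fin (n + 1) → Fin m) → (Fin (n + 1) → Fin q) → ℝ) : Prop :=
  ∀ j, Z j = diagT n q (-1) ∨ Z j = diagT n q 0 ∨ Z j = diagT n q 1

theorem sum_eq_sum_const_of_eq_zero {ι κ M : Type*} [Fintype ι] [DecidableEq ι] [Fintype κ]
    [AddCommMonoid M] (i₀ : ι) (f : (ι → κ) → M)
    (hf : ∀ k, (¬ ∀ i, k i = k i₀) → f k = 0) :
    ∑ k, f k = ∑ a, f (Function.const ι a) := by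
  have : Nonempty ι := ⟨i₀⟩
  refine (Fintype.sum_of_injective (Function.const ι) Function.const_injective _ f
    (fun k hk ↦ hf k fun hconst ↦ hk ?_) fun _ ↦ rfl).symm
  exact ⟨k i₀, funext fun i ↦ (hconst i).symm⟩

theorem diagT_apply_const (n q : ℕ) (c : ℝ) (a : Fin q) :
    diagT n q c (Function.const _ a) = c :=
  if_pos fun _ ↦ rfl

theorem diagT_apply_of_not_forall_eq {n q : ℕ} (c : ℝ) {k : Fin (n + 1) → Fin q}
    (hk : ¬ ∀ i, k i = k 0) : diagT n q c k = 0 :=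
  if_neg hk

theorem diagT_zero (n q : ℕ) : diagT n q 0 = 0 :=
  funext fun _ ↦ ite_self 0

theorem tucker_zero (n q : ℕ) (u : Fin (n + 1) → Fin q → ℝ) : tucker n q 0 u = 0 := by
  simp [tucker]

theorem tucker_diagT (n q : ℕ) (c : ℝ) (u : Fin (n + 1) → Fin q → ℝ) :
    tucker n q (diagT n q c) u = c * mip n q u := by
  calc tucker n q (diagT n q c) u
      = ∑ a, diagT n q c (Function.const _ a) * ∏ i, u i a :=
        sum_eq_sum_const_of_eq_zero 0 _ fun k hk ↦ by
          rw [diagT_apply_of_not_forall_eq c hk, zero_mul]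
    _ = c * mip n q u := by simp only [diagT_apply_const, mip, mul_sum]

theorem s2sScore_eq_sum_tucker_diagonal (n m q : ℕ)
    (Z : (Fin (n + 1) → Fin m) → (Fin (n + 1) → Fin q) → ℝ)
    (hZ : ∀ j, (¬ ∀ i, j i = j 0) → Z j = 0) (vs : Fin (n + 1) → Fin (m * q) → ℝ) :
    s2sScore n m q Z vs
      = ∑ a, tucker n q (Z (Function.const _ a)) fun i ↦ seg m q (vs i) a :=
  sum_eq_sum_const_of_eq_zero 0 _ fun j hj ↦ by rw [hZ j hj, tucker_zero]

theorem mip_eq_sum_mip_seg (n m q : ℕ) (v : Fin (n + 1) → Fin (m * q) → ℝ) :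
    mip n (m * q) v = ∑ j, mip n q fun i ↦ seg m q (v i) j := by
  simp only [mip, seg, ← finProdFinEquiv.sum_comp, Fintype.sum_prod_type]

/-- the S2S core tensor whose block `Z_{j_0,…,j_n}` is `I_1^n` when all the
`j_i` coincide and `I_0^n` otherwise recovers the n-CP scoring function: its S2S score
equals the multilinear inner product of the full vectors in `ℝ^(m·q)`. -/
theorem nCP_special_case_of_s2s (n m q : ℕ) (hn : 2 ≤ n) (hm : 1 ≤ m) (hq : 1 ≤ q)
    (Z : (Fin (n + 1) → Fin m) → (Fin (n + 1) → Fin q) → ℝ)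
    (hZ : ∀ j, Z j = if (∀ i, j i = j 0) then diagT n q 1 else diagT n q 0)
    (vs : Fin (n + 1) → Fin (m * q) → ℝ) :
    s2sScore n m q Z vs = mip n (m * q) vs := by
  have hZ_diag (a : Fin m) : Z (Function.const _ a) = diagT n q 1 :=
    (hZ _).trans (if_pos fun _ ↦ rfl)
  have hZ_offdiag (j : Fin (n + 1) → Fin m) (hj : ¬ ∀ i, j i = j 0) : Z j = 0 := by
    rw [hZ, if_neg hj, diagT_zero]
  calc s2sScore n m q Z vs
      = ∑ a, tucker n q (Z (Function.const _ a)) fun i ↦ seg m q (vs i) a :=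
        s2sScore_eq_sum_tucker_diagonal n m q Z hZ_offdiag vs
    _ = ∑ a, mip n q fun i ↦ seg m q (vs i) a := by
        simp only [hZ_diag, tucker_diagT, one_mul]
    _ = mip n (m * q) vs := (mip_eq_sum_mip_seg n m q vs).symm
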